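/- arXiv:math/9909183 — 2 statements merged into one kernel-verified Lean document; each statement's English description precedes it below -/
import Mathlib

section
/- For all a, b, c, d ∈ ℕ and m, n ∈ ℤ, the commutator [𝔏(a,b;m), 𝔏(c,d;n)] lies in the ℂ-linear span of {𝔏(p,q;m+n) : p, q ∈ ℕ, p+q ≤ a+b+c+d+1} ∪ {id_S}; moreover, if m+n ≠ 0 then it lies in the ℂ-linear span of {𝔏(p,q;m+n) : p, q ∈ ℕ, p+q ≤ a+b+c+d+1} alone (no identity component). -/
/-!
Write `Q_n(f) = (1/2) ∑ⱼ f(j) :h(j)h(n-j):` for an arbitrary symbol `f : ℤ → ℂ`, so that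
`𝔏(a,b;n) = Q_n(j ↦ jᵃ(n-j)ᵇ)`. An operator on `S` is determined up to a scalar by its commutators
with the `h(k)`, because an operator commuting with all multiplications and partial derivatives is
a scalar. Since `[Q_m(f), h(k)]` is an explicit multiple of `h(m+k)`, the Jacobi identity shows that
`[Q_m(f), Q_n(g)]` has the same commutators with the `h(k)` as `Q_{m+n}(s)` for an explicit symbol
`s`, which is polynomial of degree at most `deg f + deg g + 1` when `f` and `g` are polynomial.

The scalar by which the two differ is the vacuum expectation value of the commutator. The energy
operator `E = Q_0(1)` annihilates the vacuum on both sides, and `[E, ·]` acts on `[Q_m(f), Q_n(g)]`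
by `-(m+n)`, so the scalar vanishes when `m + n ≠ 0`.
-/

noncomputable section

/-- The polynomial algebra `S = ℂ[a₁,a₂,a₃,…]`, with variables indexed by `ℕ+`. -/
abbrev SS : Type := MvPolynomial ℕ+ ℂ

/-- The Heisenberg operators `h(n)` on `S`: for `n < 0`, multiplication by `a₋ₙ`;
for `n > 0`, `n·∂/∂aₙ`; and `h(0) = 0`. -/
noncomputable def hOp (n : ℤ) : Module.End ℂ SS :=
  if _h1 : 0 < n then
    (n : ℂ) • (MvPolynomial.pderiv (R := ℂ) (⟨n.toNat, by omega⟩ : ℕ+)).toLinearMap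
  else if _h2 : n < 0 then
    LinearMap.mulLeft ℂ (MvPolynomial.X (⟨(-n).toNat, by omega⟩ : ℕ+))
  else 0

/-- The normally ordered product `:h(i)h(j):`  (equal to `h(i)∘h(j)` if `i ≤ j`,
and to `h(j)∘h(i)` if `i > j`; note `f * g` is composition in `Module.End`). -/
noncomputable def nord (i j : ℤ) : Module.End ℂ SS :=
  if i ≤ j then hOp i * hOp j else hOp j * hOp i

attribute [local instance] LieRing.ofAssociativeRing

section MvPolynomial

open MvPolynomial

variable {σ R : Type*} [CommRing R]

lemma lie_pderiv_pderiv (i j : σ) : ⁅pderiv (R := R) i, pderiv (R := R) j⁆ = 0 := by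
  classical
  refine derivation_ext fun k => ?_
  simp [Derivation.commutator_apply, pderiv_X, Pi.single_apply, apply_ite]

lemma lie_pderiv_mulLeft_X [DecidableEq σ] (i j : σ) :
    ⁅(pderiv (R := R) i).toLinearMap, LinearMap.mulLeft R (X (R := R) j)⁆ =
      if i = j then 1 else 0 := by
  refine LinearMap.ext fun p => ?_
  rcases eq_or_ne i j with rfl | hij
  · simp [Ring.lie_def]
  · simp [Ring.lie_def, pderiv_X_of_ne hij.symm, hij]

lemma eq_C_constantCoeff_of_pderiv_eq_zero [IsAddTorsionFree R] {p : MvPolynomial σ R}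
    (hp : ∀ i, pderiv i p = 0) : p = C (constantCoeff p) := by
  refine coe_injective σ R (MvPowerSeries.pderiv.ext (fun i => ?_) ?_)
  · simp [MvPowerSeries.pderiv_coe, hp]
  · rw [← MvPowerSeries.coeff_zero_eq_constantCoeff_apply,
      ← MvPowerSeries.coeff_zero_eq_constantCoeff_apply]
    simp [constantCoeff_eq]

/-- Schur's lemma for the Weyl algebra acting on polynomials. -/
lemma eq_constantCoeff_smul_one_of_lie_eq_zero [IsAddTorsionFree R]
    {D : Module.End R (MvPolynomial σ R)}
    (hX : ∀ i : σ, ⁅D, LinearMap.mulLeft R (X (R := R) i)⁆ = 0)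
    (hpderiv : ∀ i : σ, ⁅D, (pderiv (R := R) i).toLinearMap⁆ = 0) :
    D = constantCoeff (D 1) • 1 := by
  simp only [← commute_iff_lie_eq] at hX hpderiv
  have hD_one : D 1 = C (constantCoeff (D 1)) :=
    eq_C_constantCoeff_of_pderiv_eq_zero fun i => by
      simpa using (LinearMap.congr_fun (hpderiv i) 1).symm
  have hD_mul (p : MvPolynomial σ R) : D p = p * D 1 := by
    induction p using MvPolynomial.induction_on with
    | C r => rw [← mul_one (C r), ← smul_eq_C_mul, map_smul, smul_mul_assoc, one_mul]
    | add p q hp hq => rw [map_add, hp, hq, add_mul]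
    | mul_X p i hp =>
      have hDX : D (X i * p) = X i * D p := LinearMap.congr_fun (hX i) p
      rw [mul_comm p, hDX, hp, mul_assoc]
  refine LinearMap.ext fun p => ?_
  rw [hD_mul p, LinearMap.smul_apply, Module.End.one_apply, smul_eq_C_mul, ← hD_one, mul_comm]

end MvPolynomial

open MvPolynomial (constantCoeff pderiv)

@[elab_as_elim]
lemma int_pnat_cases {motive : ℤ → Prop} (pos : ∀ q : ℕ+, motive (q : ℕ))
    (neg : ∀ q : ℕ+, motive (-(q : ℕ))) (zero : motive 0) (n : ℤ) : motive n := by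
  obtain ⟨k, rfl | rfl⟩ := n.eq_nat_or_neg <;> rcases k.eq_zero_or_pos with rfl | hk
  · exact zero
  · exact pos ⟨k, hk⟩
  · exact zero
  · exact neg ⟨k, hk⟩

lemma hOp_natCast (q : ℕ+) :
    hOp (q : ℕ) = (q : ℂ) • (pderiv (R := ℂ) q).toLinearMap := by
  have hq : (0 : ℤ) < (q : ℕ) := by exact_mod_cast q.pos
  have hq_toNat : (⟨((q : ℕ) : ℤ).toNat, by omega⟩ : ℕ+) = q := PNat.eq (by simp)
  exact (dif_pos hq).trans (by rw [hq_toNat]; rfl)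

lemma hOp_neg_natCast (q : ℕ+) :
    hOp (-(q : ℕ)) = LinearMap.mulLeft ℂ (MvPolynomial.X q) := by
  have hq : (0 : ℤ) < (q : ℕ) := by exact_mod_cast q.pos
  have hq_neg : -(q : ℤ) < 0 := by omega
  have hq_toNat : (⟨(-(-(q : ℤ))).toNat, by omega⟩ : ℕ+) = q := PNat.eq (by simp)
  exact (dif_neg hq_neg.not_gt).trans ((dif_pos hq_neg).trans (by rw [hq_toNat]))

lemma hOp_zero : hOp 0 = 0 := by simp [hOp]

lemma lie_hOp_natCast_neg_natCast (q r : ℕ+) :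
    ⁅hOp (q : ℕ), hOp (-(r : ℕ))⁆ = if q = r then (q : ℂ) • 1 else 0 := by
  rw [hOp_natCast, hOp_neg_natCast, smul_lie (L := Module.End ℂ SS), lie_pderiv_mulLeft_X,
    smul_ite, smul_zero]

lemma lie_hOp_hOp (i j : ℤ) : ⁅hOp i, hOp j⁆ = if i + j = 0 then (i : ℂ) • 1 else 0 := by
  induction i using int_pnat_cases with
  | zero => simp [hOp_zero]
  | pos q =>
    induction j using int_pnat_cases with
    | zero => simp [hOp_zero]
    | pos r =>
      rw [if_neg (by have := q.pos; omega), hOp_natCast, hOp_natCast,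
        smul_lie (L := Module.End ℂ SS),
        lie_smul (M := Module.End ℂ SS),
        ← Derivation.commutator_coe_linear_map, lie_pderiv_pderiv]
      simp
    | neg r =>
      rw [lie_hOp_natCast_neg_natCast]
      simp [add_neg_eq_zero, ← PNat.coe_inj]
  | neg q =>
    induction j using int_pnat_cases with
    | zero => simp [hOp_zero]
    | pos r =>
      rw [← lie_skew, lie_hOp_natCast_neg_natCast]
      rcases eq_or_ne q r with rfl | h
      · simp [neg_smul _ (1 : Module.End ℂ SS)]
      · simp [neg_add_eq_zero, PNat.coe_inj, h, h.symm]
    | neg r =>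
      rw [if_neg (by have := q.pos; omega), ← commute_iff_lie_eq, hOp_neg_natCast,
        hOp_neg_natCast]
      exact LinearMap.ext fun p => mul_left_comm _ _ p

lemma hOp_one_of_nonneg {i : ℤ} (hi : 0 ≤ i) : hOp i 1 = 0 := by
  induction i using int_pnat_cases with
  | zero => simp [hOp_zero]
  | pos q => simp [hOp_natCast]
  | neg q => have := q.pos; omega

lemma constantCoeff_hOp_of_nonpos {i : ℤ} (hi : i ≤ 0) (p : SS) :
    constantCoeff (hOp i p) = 0 := by
  induction i using int_pnat_cases with
  | zero => simp [hOp_zero]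
  | pos q => have := q.pos; omega
  | neg q => simp [hOp_neg_natCast]

lemma eventually_hOp_apply_eq_zero (p : SS) : ∀ᶠ k in Filter.atTop, hOp k p = 0 := by
  filter_upwards [Filter.eventually_gt_atTop ((p.vars.sup (↑) : ℕ) : ℤ)] with k hk
  induction k using int_pnat_cases with
  | zero => simp [hOp_zero]
  | pos q =>
    have hq : q ∉ p.vars := fun hq => by
      have := Finset.le_sup (f := ((↑) : ℕ+ → ℕ)) hq
      omega
    simp [hOp_natCast, MvPolynomial.pderiv_eq_zero_of_notMem_vars hq]
  | neg q => omega

/-- The vacuum expectation value `⟨0|A|0⟩`, where the vacuum vector is `1` and the dual vacuum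
takes the constant coefficient. -/
def vacuumExpectation : Module.End ℂ SS →ₗ[ℂ] ℂ where
  toFun A := constantCoeff (A 1)
  map_add' := by simp
  map_smul' := by simp

lemma vacuumExpectation_apply (A : Module.End ℂ SS) :
    vacuumExpectation A = constantCoeff (A 1) := rfl

lemma eq_add_vacuumExpectation_smul_one {A B : Module.End ℂ SS}
    (h : ∀ k, ⁅A, hOp k⁆ = ⁅B, hOp k⁆) : A = B + vacuumExpectation (A - B) • 1 := by
  have hD (k : ℤ) : ⁅A - B, hOp k⁆ = 0 := by rw [sub_lie, h, sub_self]
  rw [← sub_eq_iff_eq_add']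
  refine eq_constantCoeff_smul_one_of_lie_eq_zero (fun q => ?_) fun q => ?_
  · rw [← hOp_neg_natCast, hD]
  · have hq : (q : ℂ) ≠ 0 := by exact_mod_cast q.ne_zero
    have := hD (q : ℕ)
    rwa [hOp_natCast, lie_smul (M := Module.End ℂ SS), smul_eq_zero_iff_right hq] at this

lemma nord_eq_min_max (i j : ℤ) : nord i j = hOp (min i j) * hOp (max i j) := by
  rcases le_or_gt i j with h | h
  · rw [nord, if_pos h, min_eq_left h, max_eq_right h]
  · rw [nord, if_neg h.not_ge, min_eq_right h.le, max_eq_left h.le]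

lemma nord_one_of_nonneg {i j : ℤ} (h : 0 ≤ i + j) : nord i j 1 = 0 := by
  rw [nord_eq_min_max, Module.End.mul_apply, hOp_one_of_nonneg (by rw [le_max_iff]; omega),
    map_zero]

lemma constantCoeff_nord_of_nonpos {i j : ℤ} (h : i + j ≤ 0) (p : SS) :
    constantCoeff (nord i j p) = 0 := by
  rw [nord_eq_min_max]
  exact constantCoeff_hOp_of_nonpos (by rw [min_le_iff]; omega) _

lemma mul_lie_eq_add {A : Type*} [Ring A] (a b c : A) :
    ⁅a * b, c⁆ = a * ⁅b, c⁆ + ⁅a, c⁆ * b := by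
  simp only [Ring.lie_def]
  noncomm_ring

lemma lie_nord_hOp (i j k : ℤ) :
    ⁅nord i j, hOp k⁆ =
      (if j + k = 0 then (j : ℂ) else 0) • hOp i + (if i + k = 0 then (i : ℂ) else 0) • hOp j := by
  unfold nord
  split_ifs <;> simp [mul_lie_eq_add, lie_hOp_hOp, add_comm, *]

lemma hasFiniteSupport_smul_nord (f : ℤ → ℂ) (n : ℤ) (p : SS) :
    (fun j => f j • nord j (n - j) p).HasFiniteSupport := by
  obtain ⟨N, hN⟩ := Filter.eventually_atTop.mp (eventually_hOp_apply_eq_zero p)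
  refine (Set.finite_Icc (n - N) N).subset fun j hj => ?_
  contrapose! hj
  have hmax : N ≤ max j (n - j) := by
    rw [Set.mem_Icc, not_and_or] at hj
    omega
  simp [nord_eq_min_max, hN _ hmax]

/-- The quadratic operator `(1/2) ∑ⱼ f(j) :h(j)h(n-j):` with an arbitrary symbol `f`, as a linear
function of `f`; `𝔏(a,b;n)` has symbol `j ↦ jᵃ(n-j)ᵇ`. -/
def quadOp (n : ℤ) : (ℤ → ℂ) →ₗ[ℂ] Module.End ℂ SS :=
  LinearMap.mk₂ ℂ (fun f p => (1 / 2 : ℂ) • ∑ᶠ j, f j • nord j (n - j) p)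
    (fun f g p => by
      simp only [Pi.add_apply, add_smul]
      rw [finsum_add_distrib (hasFiniteSupport_smul_nord f n p) (hasFiniteSupport_smul_nord g n p),
        smul_add])
    (fun c f p => by
      simp only [Pi.smul_apply, smul_assoc]
      rw [← smul_finsum, smul_comm])
    (fun f p q => by
      simp only [map_add, smul_add]
      rw [finsum_add_distrib (hasFiniteSupport_smul_nord f n p) (hasFiniteSupport_smul_nord f n q),
        smul_add])
    (fun c f p => by
      simp only [map_smul, smul_comm _ c]
      rw [← smul_finsum, smul_comm])

lemma quadOp_apply (n : ℤ) (f : ℤ → ℂ) (p : SS) :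
    quadOp n f p = (1 / 2 : ℂ) • ∑ᶠ j, f j • nord j (n - j) p := rfl

lemma quadOp_one_of_nonneg {n : ℤ} (hn : 0 ≤ n) (f : ℤ → ℂ) : quadOp n f 1 = 0 := by
  simp [quadOp_apply, nord_one_of_nonneg, hn]

lemma constantCoeff_quadOp_of_nonpos {n : ℤ} (hn : n ≤ 0) (f : ℤ → ℂ) (p : SS) :
    constantCoeff (quadOp n f p) = 0 := by
  have hsum : constantCoeff (∑ᶠ j, f j • nord j (n - j) p) =
      ∑ᶠ j, constantCoeff (f j • nord j (n - j) p) :=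
    AddMonoidHom.map_finsum (constantCoeff : SS →+* ℂ).toAddMonoidHom
      (hasFiniteSupport_smul_nord f n p)
  rw [quadOp_apply, MvPolynomial.constantCoeff_smul, hsum]
  simp [constantCoeff_nord_of_nonpos, hn]

lemma vacuumExpectation_quadOp (n : ℤ) (f : ℤ → ℂ) : vacuumExpectation (quadOp n f) = 0 := by
  rcases le_total 0 n with hn | hn
  · rw [vacuumExpectation_apply, quadOp_one_of_nonneg hn, map_zero]
  · exact constantCoeff_quadOp_of_nonpos hn f 1

lemma lie_quadOp_apply (n : ℤ) (f : ℤ → ℂ) (A : Module.End ℂ SS) (p : SS) :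
    ⁅quadOp n f, A⁆ p = (1 / 2 : ℂ) • ∑ᶠ j, f j • ⁅nord j (n - j), A⁆ p := by
  have hA : A (∑ᶠ j, f j • nord j (n - j) p) = ∑ᶠ j, f j • A (nord j (n - j) p) := by
    simpa using A.toAddMonoidHom.map_finsum (hasFiniteSupport_smul_nord f n p)
  have hsupport : (fun j => f j • A (nord j (n - j) p)).HasFiniteSupport := by
    simpa using Function.HasFiniteSupport.fun_comp (hasFiniteSupport_smul_nord f n p) (map_zero A)
  simp only [Ring.lie_def, LinearMap.sub_apply, Module.End.mul_apply, smul_sub]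
  rw [finsum_sub_distrib (hasFiniteSupport_smul_nord f n (A p)) hsupport, quadOp_apply,
    quadOp_apply, map_smul, hA, smul_sub]

/-- The scalar `c(k)` in `[Q, h(k)] = c(k) h(n+k)`, for `Q = quadOp n f`; the two summands come
from `j = n+k` and `j = -k`. -/
def lieCoeff (n : ℤ) (f : ℤ → ℂ) (k : ℤ) : ℂ := -(k / 2) * (f (n + k) + f (-k))

lemma lie_quadOp_hOp (n : ℤ) (f : ℤ → ℂ) (k : ℤ) :
    ⁅quadOp n f, hOp k⁆ = lieCoeff n f k • hOp (n + k) := by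
  refine LinearMap.ext fun p => ?_
  let u (j : ℤ) : SS := f j • (if n - j + k = 0 then ((n - j : ℤ) : ℂ) else 0) • hOp j p
  let v (j : ℤ) : SS := f j • (if j + k = 0 then (j : ℂ) else 0) • hOp (n - j) p
  have hu (j : ℤ) (hj : j ≠ n + k) : u j = 0 := by simp [u, show n - j + k ≠ 0 by omega]
  have hv (j : ℤ) (hj : j ≠ -k) : v j = 0 := by simp [v, show j + k ≠ 0 by omega]
  have hu_support : u.HasFiniteSupport :=
    (Set.finite_singleton (n + k)).subset (Function.support_subset_iff'.mpr hu)
  have hv_support : v.HasFiniteSupport :=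
    (Set.finite_singleton (-k)).subset (Function.support_subset_iff'.mpr hv)
  have hu_eq : u (n + k) = (-k * f (n + k)) • hOp (n + k) p := by simp [u, smul_smul, mul_comm]
  have hv_eq : v (-k) = (-k * f (-k)) • hOp (n + k) p := by simp [v, smul_smul, mul_comm]
  calc
    ⁅quadOp n f, hOp k⁆ p = (1 / 2 : ℂ) • ∑ᶠ j, (u j + v j) := by
      simp only [lie_quadOp_apply, lie_nord_hOp, LinearMap.add_apply, LinearMap.smul_apply,
        smul_add, u, v]
    _ = (1 / 2 : ℂ) • (u (n + k) + v (-k)) := by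
      rw [finsum_add_distrib hu_support hv_support, finsum_eq_single u _ hu,
        finsum_eq_single v _ hv]
    _ = lieCoeff n f k • hOp (n + k) p := by
      rw [hu_eq, hv_eq, lieCoeff]
      module

/-- The symbol of the commutator of `quadOp m f` and `quadOp n g`, obtained by letting
`[quadOp m f, ·]` act as a derivation on each product `h(i)h(n-i)` in `quadOp n g`, ignoring
normal ordering, and collecting the multiples of `h(j)h(m+n-j)`. -/
def lieSymbol (m n : ℤ) (f g : ℤ → ℂ) (j : ℤ) : ℂ :=
  g (j - m) * lieCoeff m f (j - m) + g j * lieCoeff m f (n - j)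

lemma lieCoeff_lieSymbol (m n : ℤ) (f g : ℤ → ℂ) (k : ℤ) :
    lieCoeff (m + n) (lieSymbol m n f g) k =
      lieCoeff n g k * lieCoeff m f (n + k) - lieCoeff m f k * lieCoeff n g (m + k) := by
  simp only [lieSymbol, lieCoeff]
  push_cast
  ring_nf

lemma lie_lie_quadOp_hOp (m n : ℤ) (f g : ℤ → ℂ) (k : ℤ) :
    ⁅⁅quadOp m f, quadOp n g⁆, hOp k⁆ = ⁅quadOp (m + n) (lieSymbol m n f g), hOp k⁆ := by
  rw [lie_lie, lie_quadOp_hOp m, lie_quadOp_hOp n, lie_smul _ _ (hOp (n + k)),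
    lie_smul _ _ (hOp (m + k)), lie_quadOp_hOp, lie_quadOp_hOp, lie_quadOp_hOp, lieCoeff_lieSymbol,
    smul_smul, smul_smul, ← add_assoc m, add_left_comm n, ← add_assoc m,
    sub_smul _ _ (hOp (m + n + k))]

theorem lie_quadOp_quadOp (m n : ℤ) (f g : ℤ → ℂ) :
    ⁅quadOp m f, quadOp n g⁆ = quadOp (m + n) (lieSymbol m n f g) +
      vacuumExpectation ⁅quadOp m f, quadOp n g⁆ • 1 := by
  simpa [vacuumExpectation_quadOp] using
    eq_add_vacuumExpectation_smul_one (lie_lie_quadOp_hOp m n f g)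

lemma vacuumExpectation_lie_quadOp_zero (f : ℤ → ℂ) (A : Module.End ℂ SS) :
    vacuumExpectation ⁅quadOp 0 f, A⁆ = 0 := by
  simp [vacuumExpectation_apply, Ring.lie_def, quadOp_one_of_nonneg,
    constantCoeff_quadOp_of_nonpos]

/-- The energy operator `quadOp 0 1 = ∑_{j>0} h(-j)h(j)` grades `S` with `aⱼ` in degree `j`, so this
says that `quadOp n f` has degree `-n`. -/
lemma lie_quadOp_zero_one (n : ℤ) (f : ℤ → ℂ) :
    ⁅quadOp 0 1, quadOp n f⁆ = -(n : ℂ) • quadOp n f := by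
  have hsymbol : lieSymbol 0 n 1 f = -(n : ℂ) • f := by
    ext j
    simp only [lieSymbol, lieCoeff, Pi.one_apply, Pi.smul_apply, smul_eq_mul, sub_zero]
    push_cast
    ring
  rw [lie_quadOp_quadOp, vacuumExpectation_lie_quadOp_zero, hsymbol, zero_smul, add_zero, zero_add,
    map_smul]

lemma vacuumExpectation_lie_quadOp_quadOp {m n : ℤ} (hmn : m + n ≠ 0) (f g : ℤ → ℂ) :
    vacuumExpectation ⁅quadOp m f, quadOp n g⁆ = 0 := by
  have hweight : ⁅quadOp 0 1, ⁅quadOp m f, quadOp n g⁆⁆ =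
      -((m + n : ℤ) : ℂ) • ⁅quadOp m f, quadOp n g⁆ := by
    rw [leibniz_lie, lie_quadOp_zero_one, lie_quadOp_zero_one, smul_lie _ (quadOp m f),
      lie_smul _ _ (quadOp n g), ← add_smul]
    push_cast
    ring_nf
  have := vacuumExpectation_lie_quadOp_zero 1 ⁅quadOp m f, quadOp n g⁆
  rw [hweight, map_smul, smul_eq_zero_iff_right] at this
  · exact this
  · exact neg_ne_zero.mpr (Int.cast_ne_zero.mpr hmn)

section PolynomialSymbol

open Polynomial

lemma exists_lieSymbol_eq_eval (m n : ℤ) (f g : ℂ[X]) :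
    ∃ s : ℂ[X], s.natDegree ≤ f.natDegree + g.natDegree + 1 ∧
      lieSymbol m n (fun j => f.eval (j : ℂ)) (fun j => g.eval (j : ℂ)) =
        fun j : ℤ => s.eval (j : ℂ) := by
  have hX_sub_C (c : ℂ) : (X - C c).natDegree ≤ 1 := natDegree_X_sub_C_le c
  have hC_sub_X (c : ℂ) : (C c - X).natDegree ≤ 1 := by compute_degree
  have hcomp (p : ℂ[X]) {l : ℂ[X]} (hl : l.natDegree ≤ 1) : (p.comp l).natDegree ≤ p.natDegree :=
    natDegree_comp_le.trans (mul_le_of_le_one_right (Nat.zero_le _) hl)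
  let s₁ := (f + f.comp (C (m : ℂ) - X)) * (g.comp (X - C (m : ℂ)) * (X - C (m : ℂ)))
  let s₂ := (f.comp (C ((m + n : ℤ) : ℂ) - X) + f.comp (X - C (n : ℂ))) * (g * (C (n : ℂ) - X))
  refine ⟨C (-1 / 2) * (s₁ + s₂), (natDegree_C_mul_le _ _).trans ?_, ?_⟩
  · refine natDegree_add_le_of_degree_le ?_ ?_ <;> rw [add_assoc]
    · exact natDegree_mul_le_of_le (natDegree_add_le_of_degree_le le_rfl (hcomp f (hC_sub_X _)))
        (natDegree_mul_le_of_le (hcomp g (hX_sub_C _)) (hX_sub_C _))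
    · exact natDegree_mul_le_of_le
        (natDegree_add_le_of_degree_le (hcomp f (hC_sub_X _)) (hcomp f (hX_sub_C _)))
        (natDegree_mul_le_of_le le_rfl (hC_sub_X _))
  · funext j
    simp only [s₁, s₂, lieSymbol, lieCoeff, eval_mul, eval_add, eval_comp, eval_sub, eval_C, eval_X]
    push_cast
    ring_nf

lemma quadOp_eval_mem_span_pow (n : ℤ) {N : ℕ} {s : ℂ[X]} (hs : s.natDegree ≤ N) :
    quadOp n (fun j => s.eval (j : ℂ)) ∈
      Submodule.span ℂ {A | ∃ i ≤ N, A = quadOp n fun j => (j : ℂ) ^ i} := by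
  have hsum : (fun j : ℤ => s.eval (j : ℂ)) =
      ∑ i ∈ Finset.range (N + 1), s.coeff i • fun j : ℤ => (j : ℂ) ^ i := by
    ext j
    simp [eval_eq_sum_range' (Nat.lt_succ_of_le hs)]
  rw [hsum, map_sum]
  refine Submodule.sum_mem _ fun i hi => ?_
  rw [map_smul]
  exact Submodule.smul_mem _ _ (Submodule.subset_span ⟨i, Finset.mem_range_succ_iff.mp hi, rfl⟩)

/-- The symbol `jᵃ(n-j)ᵇ` of `𝔏(a,b;n)`, as a polynomial in `j`. -/
def monomialSymbol (a b : ℕ) (n : ℤ) : ℂ[X] := X ^ a * (C (n : ℂ) - X) ^ b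

lemma natDegree_monomialSymbol_le (a b : ℕ) (n : ℤ) :
    (monomialSymbol a b n).natDegree ≤ a + b := by
  rw [monomialSymbol]
  compute_degree

lemma eval_monomialSymbol (a b : ℕ) (n : ℤ) (z : ℂ) :
    (monomialSymbol a b n).eval z = z ^ a * (n - z) ^ b := by
  simp [monomialSymbol]

end PolynomialSymbol

/-- The commutator `[𝔏(a,b;m), 𝔏(c,d;n)]` lies in the span of
`{𝔏(p,q;m+n) : p+q ≤ a+b+c+d+1} ∪ {id_S}`; and if `m+n ≠ 0`, no identity component
is needed. -/
theorem commutator_of_quadratic_operators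
    (LL : ℕ → ℕ → ℤ → Module.End ℂ SS)
    (hLL : ∀ (a b : ℕ) (n : ℤ) (p : SS), LL a b n p
      = (1 / 2 : ℂ) •
          ∑ᶠ j : ℤ, ((j : ℂ) ^ a * ((n : ℂ) - (j : ℂ)) ^ b) • nord j (n - j) p)
    (a b c d : ℕ) (m n : ℤ) :
    LL a b m * LL c d n - LL c d n * LL a b m
      ∈ Submodule.span ℂ
          ({g | ∃ p q : ℕ, p + q ≤ a + b + c + d + 1 ∧ g = LL p q (m + n)}
            ∪ {(1 : Module.End ℂ SS)}) ∧
    (m + n ≠ 0 →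
      LL a b m * LL c d n - LL c d n * LL a b m
        ∈ Submodule.span ℂ
            {g | ∃ p q : ℕ, p + q ≤ a + b + c + d + 1 ∧ g = LL p q (m + n)}) := by
  have hLL_eq (a b : ℕ) (n : ℤ) :
      LL a b n = quadOp n fun j => (monomialSymbol a b n).eval (j : ℂ) := by
    simp only [eval_monomialSymbol]
    exact LinearMap.ext (hLL a b n)
  obtain ⟨s, hs_degree, hs_eval⟩ :=
    exists_lieSymbol_eq_eval m n (monomialSymbol a b m) (monomialSymbol c d n)
  have hdegree : s.natDegree ≤ a + b + c + d + 1 := by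
    have := natDegree_monomialSymbol_le a b m
    have := natDegree_monomialSymbol_le c d n
    omega
  have hs_mem : quadOp (m + n) (fun j => s.eval (j : ℂ)) ∈ Submodule.span ℂ
      {g | ∃ p q : ℕ, p + q ≤ a + b + c + d + 1 ∧ g = LL p q (m + n)} := by
    refine Submodule.span_mono ?_ (quadOp_eval_mem_span_pow (m + n) hdegree)
    rintro _ ⟨i, hi, rfl⟩
    exact ⟨i, 0, hi, by simp [hLL_eq, eval_monomialSymbol]⟩
  rw [← Ring.lie_def, hLL_eq a b m, hLL_eq c d n, lie_quadOp_quadOp, hs_eval]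
  refine ⟨add_mem (Submodule.span_mono Set.subset_union_left hs_mem) ?_, fun hmn => ?_⟩
  · exact Submodule.smul_mem _ _ (Submodule.subset_span (Or.inr rfl))
  · rwa [vacuumExpectation_lie_quadOp_quadOp hmn, zero_smul, add_zero]
end
end

section
/- The family of operators {L⁽ᵖ⁾(0) : p ∈ ℕ} ∪ {id_S} is ℂ-linearly independent in End_ℂ(S). -/
noncomputable section

/-!
Every `L⁽ᵖ⁾(0)` kills the vacuum `1`, which the identity does not, so the identity is not in the
span of the `L⁽ᵖ⁾(0)`. Each variable `aₙ` is a common eigenvector: only `j = ±n` contribute to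
`L⁽ᵖ⁾(0) aₙ`, and the eigenvalue is `(-n²)ᵖ n`. A linear relation among the `L⁽ᵖ⁾(0)` thus gives a
polynomial vanishing at the infinitely many points `-n²`, which must be zero.
-/

open MvPolynomial Set

section LinearAlgebra

variable {ι κ R M : Type*}

theorem linearIndependent_of_common_eigenvectors [CommRing R] [IsDomain R] [AddCommGroup M]
    [Module R M] [Module.IsTorsionFree R M] {T : ι → Module.End R M} {μ : ι → κ → R} {v : κ → M}
    (hv : ∀ k, v k ≠ 0) (hT : ∀ i k, T i (v k) = μ i k • v k) (hμ : LinearIndependent R μ) :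
    LinearIndependent R T := by
  rw [linearIndependent_iff'] at hμ ⊢
  intro s c hc
  refine hμ s c (funext fun k ↦ ?_)
  have hk : (∑ i ∈ s, c i * μ i k) • v k = 0 := by
    simpa [hT, Finset.sum_smul, mul_smul] using LinearMap.congr_fun hc (v k)
  simpa using (smul_eq_zero.mp hk).resolve_right (hv k)

theorem one_notMem_span_range_of_apply_eq_zero [CommSemiring R] [AddCommMonoid M] [Module R M]
    {T : ι → Module.End R M} {x : M} (hx : x ≠ 0) (hT : ∀ i, T i x = 0) :
    1 ∉ Submodule.span R (range T) := by
  intro h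
  have hle : Submodule.span R (range T) ≤ LinearMap.ker (LinearMap.applyₗ (R := R) (M₂ := M) x) :=
    Submodule.span_le.mpr (range_subset_iff.mpr hT)
  exact hx (hle h)

theorem linearIndependent_pow_mul [CommRing R] [IsDomain R] {y w : κ → R}
    (hy : (range y).Infinite) (hw : ∀ k, w k ≠ 0) :
    LinearIndependent R fun (p : ℕ) k ↦ y k ^ p * w k := by
  let Φ : Polynomial R →ₗ[R] κ → R := LinearMap.pi fun k ↦ w k • Polynomial.leval (y k)
  have hΦ : LinearMap.ker Φ = ⊥ := by
    refine LinearMap.ker_eq_bot'.mpr fun Q hQ ↦ Polynomial.eq_zero_of_infinite_isRoot Q ?_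
    refine hy.mono (range_subset_iff.mpr fun k ↦ ?_)
    exact (mul_eq_zero.mp (congrFun hQ k)).resolve_left (hw k)
  have hpow : (fun (p : ℕ) k ↦ y k ^ p * w k) = Φ ∘ Polynomial.basisMonomials R := by
    ext p k
    simp [Φ, Polynomial.leval, mul_comm]
  exact hpow ▸ (Polynomial.basisMonomials R).linearIndependent.map' Φ hΦ

theorem infinite_range_neg_pnat_sq [Ring R] [CharZero R] :
    (range fun n : ℕ+ ↦ -(n : R) ^ 2).Infinite := by
  refine infinite_range_of_injective fun m n hmn ↦ ?_
  have hsq : (m : ℕ) ^ 2 = (n : ℕ) ^ 2 := by exact_mod_cast neg_injective hmn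
  exact PNat.coe_injective (Nat.pow_left_injective two_ne_zero hsq)

end LinearAlgebra

theorem hOp_pnat (n : ℕ+) : hOp n = (n : ℂ) • (pderiv (R := ℂ) n).toLinearMap :=
  dif_pos (Int.natCast_pos.mpr n.pos)

theorem hOp_neg_pnat (n : ℕ+) : hOp (-n) = LinearMap.mulLeft ℂ (X n) := by
  have hn : -(n : ℤ) < 0 := neg_neg_of_pos (Int.natCast_pos.mpr n.pos)
  have hindex : (⟨(- -(n : ℤ)).toNat, by omega⟩ : ℕ+) = n := PNat.eq (by simp)
  calc hOp (-n) = LinearMap.mulLeft ℂ (X ⟨(- -(n : ℤ)).toNat, by omega⟩) :=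
        (dif_neg hn.not_gt).trans (dif_pos hn)
    _ = LinearMap.mulLeft ℂ (X n) := by rw [hindex]

theorem nord_comm (i j : ℤ) : nord i j = nord j i := by
  rcases lt_trichotomy i j with h | rfl | h
  · rw [nord, nord, if_pos h.le, if_neg h.not_ge]
  · rfl
  · rw [nord, nord, if_neg h.not_ge, if_pos h.le]

theorem nord_neg_self_pnat_apply (n : ℕ+) (q : SS) :
    nord (-n) n q = (n : ℂ) • (X n * pderiv n q) := by
  simp [nord, hOp_pnat, hOp_neg_pnat]

theorem nord_self_neg_apply_eq_zero {j : ℤ} {q : SS}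
    (hq : ∀ n : ℕ+, (n : ℤ) = |j| → pderiv n q = 0) : nord j (-j) q = 0 := by
  wlog hj : j ≤ 0 generalizing j
  · simpa [nord_comm] using this (j := -j) (by simpa using hq) (by omega)
  rcases hj.eq_or_lt with rfl | hj
  · simp [nord, hOp]
  · obtain ⟨n, rfl⟩ : ∃ n : ℕ+, j = -n := ⟨⟨j.natAbs, by omega⟩, by simp only [PNat.mk_coe]; omega⟩
    rw [neg_neg, nord_neg_self_pnat_apply, hq n (by simp), mul_zero, smul_zero]

theorem nord_self_neg_X_of_ne_abs {j : ℤ} {n : ℕ+} (h : (n : ℤ) ≠ |j|) :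
    nord j (-j) (X n) = 0 :=
  nord_self_neg_apply_eq_zero fun _ hm ↦ pderiv_X_of_ne (by rintro rfl; exact h hm)

/-- The vector `L⁽ᵖ⁾(0)(q)`, as a bare function of `q`. The `∑ᶠ` takes no junk value: only the `j`
for which `a_|j|` occurs in `q` contribute. -/
def Lp0 (p : ℕ) (q : SS) : SS :=
  (1 / 2 : ℂ) • ∑ᶠ j : ℤ, ((j : ℂ) ^ p * (-(j : ℂ)) ^ p) • nord j (-j) q

theorem Lp0_one (p : ℕ) : Lp0 p 1 = 0 := by
  simp [Lp0, nord_self_neg_apply_eq_zero]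

theorem Lp0_X (p : ℕ) (n : ℕ+) : Lp0 p (X n) = ((-(n : ℂ) ^ 2) ^ p * n) • X n := by
  have hsupp : (Function.support fun j : ℤ ↦
      ((j : ℂ) ^ p * (-(j : ℂ)) ^ p) • nord j (-j) (X n)) ⊆ ({(n : ℤ), -(n : ℤ)} : Finset ℤ) := by
    refine Function.support_subset_iff'.mpr fun j hj ↦ ?_
    have habs : (n : ℤ) ≠ |j| := fun h ↦ hj (by simpa using (abs_eq (by omega)).mp h.symm)
    rw [nord_self_neg_X_of_ne_abs habs, smul_zero]
  have hterm : nord (-n) n (X n) = (n : ℂ) • X n := by simp [nord_neg_self_pnat_apply]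
  have hpow : (-(n : ℂ)) ^ p * (n : ℂ) ^ p = (-(n : ℂ) ^ 2) ^ p := by
    rw [← mul_pow, neg_mul, ← sq]
  calc Lp0 p (X n)
      = (1 / 2 : ℂ) • (((n : ℂ) ^ p * (-(n : ℂ)) ^ p) • (n : ℂ) • X n
          + ((-(n : ℂ)) ^ p * (n : ℂ) ^ p) • (n : ℂ) • X n) := by
        rw [Lp0, finsum_eq_sum_of_support_subset _ hsupp,
          Finset.sum_pair (by have := n.pos; omega), neg_neg, nord_comm n, hterm]
        simp
    _ = ((-(n : ℂ) ^ 2) ^ p * n) • X n := by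
        rw [mul_comm ((n : ℂ) ^ p), hpow]
        module

/-- The family `{L⁽ᵖ⁾(0) : p ∈ ℕ} ∪ {id_S}` is `ℂ`-linearly independent in `End_ℂ(S)`. -/
theorem Lp0_linearly_independent
    (L0 : ℕ → Module.End ℂ SS)
    (hL0 : ∀ (p : ℕ) (q : SS), L0 p q
      = (1 / 2 : ℂ) •
          ∑ᶠ j : ℤ, ((j : ℂ) ^ p * (-(j : ℂ)) ^ p) • nord j (-j) q)
    (g : Option ℕ → Module.End ℂ SS)
    (hg0 : g none = 1) (hg : ∀ p : ℕ, g (some p) = L0 p) :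
    LinearIndependent ℂ g := by
  have hg_some : g ∘ (some : ℕ → Option ℕ) = L0 := funext hg
  have hone (p : ℕ) : L0 p 1 = 0 := (hL0 p 1).trans (Lp0_one p)
  have hX (p : ℕ) (n : ℕ+) : L0 p (X n) = ((-(n : ℂ) ^ 2) ^ p * n) • X n :=
    (hL0 p (X n)).trans (Lp0_X p n)
  have heigenvalues : LinearIndependent ℂ fun (p : ℕ) (n : ℕ+) ↦ (-(n : ℂ) ^ 2) ^ p * n :=
    linearIndependent_pow_mul infinite_range_neg_pnat_sq fun n ↦ by simp
  rw [linearIndependent_option, hg_some, hg0]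
  exact ⟨linearIndependent_of_common_eigenvectors X_ne_zero hX heigenvalues,
    one_notMem_span_range_of_apply_eq_zero one_ne_zero hone⟩
end
end
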